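/- arXiv:2101.06758 — 10 statements merged into one kernel-verified Lean document; each statement's English description precedes it below -/
import Mathlib

section
/- Let γ be a real number with γ > 1 and set α = (γ − 1)/(γ + 1). For every integer i and every positive real x with γ^(i−1) < x ≤ γ^i, the representative value x̃ = 2γ^i/(γ + 1) satisfies |x̃ − x| ≤ α·x. Hence answering a query for an item lying in bucket i with the value 2γ^i/(γ+1) is α-accurate in relative error. -/
/-- With α = (γ−1)/(γ+1), the representative 2γ^i/(γ+1) of bucket i
is an α-accurate estimate of any x with γ^(i−1) < x ≤ γ^i. -/
theorem ddsketch_bucket_representative_accuracy (γ : ℝ) (hγ : 1 < γ) (i : ℤ) (x : ℝ)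
    (hx : 0 < x) (hlo : γ ^ (i - 1) < x) (hhi : x ≤ γ ^ i) :
    |2 * γ ^ i / (γ + 1) - x| ≤ (γ - 1) / (γ + 1) * x := by
  have hpos : 0 < γ + 1 := by linarith
  have hlo' : γ ^ i < x * γ := by
    rwa [zpow_sub_one₀ (by linarith), ← div_eq_mul_inv, div_lt_iff₀ (by linarith)] at hlo
  -- After clearing `γ + 1`, the two sides of the absolute value are `x ≤ γ ^ i` and `γ ^ i ≤ γ x`.
  have h₁ : 2 * γ ^ i / (γ + 1) - x = (2 * γ ^ i - (γ + 1) * x) / (γ + 1) := by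
    field_simp
  rw [h₁, abs_div, abs_of_pos hpos, div_mul_eq_mul_div]
  gcongr
  rw [abs_le]
  constructor <;> linarith
end

section
/- Let γ be a real number with γ > 1 and let x be a positive real. Then ⌈log_{γ²} x⌉ = ⌈⌈log_γ x⌉ / 2⌉, where the inner ceiling is the integer ceiling of a real and the outer one is the ceiling of the integer division by 2. In other words, the uniform-collapse reindexing i ↦ ⌈i/2⌉ applied to the bucket index with base γ yields exactly the bucket index with base γ². -/
/-- The uniform-collapse reindexing i ↦ ⌈i/2⌉ applied to the
bucket index with base γ yields the bucket index with base γ². -/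
theorem collapse_reindexing (γ : ℝ) (hγ : 1 < γ) (x : ℝ) (hx : 0 < x) :
    ⌈Real.logb (γ ^ 2) x⌉ = ⌈((⌈Real.logb γ x⌉ : ℚ) / 2)⌉ := by
  have hlog : Real.logb (γ ^ 2) x = Real.logb γ x / 2 := by
    simp only [Real.logb, Real.log_pow]
    push_cast
    rw [div_div, mul_comm]
  rw [hlog]
  -- Both sides have the same integer upper bounds: `z` is one iff `logb γ x ≤ 2 * z`,
  -- and for the integer `2 * z` the inner ceiling does not affect this inequality.
  refine eq_of_forall_ge_iff fun z => ?_
  rw [Int.ceil_le, Int.ceil_le, div_le_iff₀ two_pos, div_le_iff₀ two_pos]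
  have h : Real.logb γ x ≤ ((z * 2 : ℤ) : ℝ) ↔ ⌈Real.logb γ x⌉ ≤ z * 2 := Int.ceil_le.symm
  push_cast at h
  rw [h]
  norm_cast
end

section
/- Let γ > 1 be a real number and let D be a multiset of positive reals. Then UC(sk_γ(D)) = sk_{γ²}(D), i.e., for every integer j, sk_γ(D)(2j−1) + sk_γ(D)(2j) = sk_{γ²}(D)(j). Hence one uniform collapse of a sketch with base γ produces exactly the sketch of the same data with base γ². -/
/-!
Since `log_{γ²} x = (log_γ x) / 2`, an element lies in bucket `j` for base `γ²` exactly when its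
bucket for base `γ` is `2j - 1` or `2j` (`ceil_half_eq_iff`). These two cases are disjoint, so the
counts add up.
-/

/-- The γ-sketch of a multiset D of positive reals. -/
noncomputable def sk (γ : ℝ) (D : Multiset ℝ) : ℤ → ℕ :=
  fun k => (D.filter (fun x => ⌈Real.logb γ x⌉ = k)).card

/-- The uniform collapse operator. -/
def UC (f : ℤ → ℕ) : ℤ → ℕ := fun j => f (2 * j - 1) + f (2 * j)

/-- The odd bucket `2j - 1` and the even bucket `2j` together cover exactly `(2j - 2, 2j]`,
the double of the interval `(j - 1, j]`. -/
lemma ceil_half_eq_iff (y : ℝ) (j : ℤ) :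
    ⌈y / 2⌉ = j ↔ ⌈y⌉ = 2 * j - 1 ∨ ⌈y⌉ = 2 * j := by
  have h : ⌈y⌉ = 2 * j - 1 ∨ ⌈y⌉ = 2 * j ↔ 2 * j - 2 < ⌈y⌉ ∧ ⌈y⌉ ≤ 2 * j := by omega
  rw [h, Int.lt_ceil, Int.ceil_le, Int.ceil_eq_iff]
  push_cast
  constructor <;> rintro ⟨h₁, h₂⟩ <;> constructor <;> linarith

lemma logb_sq_base (γ x : ℝ) : Real.logb (γ ^ 2) x = Real.logb γ x / 2 := by
  simp only [Real.logb, Real.log_pow, Nat.cast_ofNat]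
  rw [div_div, mul_comm]

/-- One uniform collapse of a sketch with base γ produces
exactly the sketch of the same data with base γ². -/
theorem uniform_collapse_squares_base (γ : ℝ) (hγ : 1 < γ) (D : Multiset ℝ)
    (hpos : ∀ x ∈ D, 0 < x) :
    UC (sk γ D) = sk (γ ^ 2) D := by
  funext j
  simp only [UC, sk, logb_sq_base, ceil_half_eq_iff]
  rw [← Multiset.card_add, Multiset.filter_add_filter]
  -- No element has both indices, so the intersection term vanishes.
  have h : D.filter (fun x => ⌈Real.logb γ x⌉ = 2 * j - 1 ∧ ⌈Real.logb γ x⌉ = 2 * j) = 0 :=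
    Multiset.filter_eq_nil.2 fun x _ => by omega
  rw [h, add_zero]
end

section
/- Let γ > 1 be a real number, let D be a multiset of positive reals, and let t be a natural number. Then the t-fold iterate of the uniform collapse operator applied to the γ-sketch of D equals the sketch of D with base γ^(2^t): UC^[t](sk_γ(D)) = sk_{γ^(2^t)}(D). -/
lemma UC_sk (γ : ℝ) (D : Multiset ℝ) : UC (sk γ D) = sk (γ ^ 2) D := by
  funext j
  have hlog : ∀ x, Real.logb (γ ^ 2) x = Real.logb γ x / 2 := fun x => by
    simp only [Real.logb, Real.log_pow, Nat.cast_ofNat]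
    rw [div_div, mul_comm]
  simp only [UC, sk, hlog, ceil_half_eq_iff]
  rw [← Multiset.card_add, Multiset.filter_add_filter]
  -- The two buckets are disjoint, so the intersection term vanishes.
  have hdisj : D.filter (fun x => ⌈Real.logb γ x⌉ = 2 * j - 1 ∧ ⌈Real.logb γ x⌉ = 2 * j) = 0 :=
    Multiset.filter_eq_nil.2 fun x _ hx => by omega
  rw [hdisj, add_zero]

/-- The t-fold iterate of the uniform collapse applied to a γ-sketch
equals the sketch of the same data with base γ^(2^t). -/
theorem iterated_collapse (γ : ℝ) (hγ : 1 < γ) (D : Multiset ℝ)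
    (hpos : ∀ x ∈ D, 0 < x) (t : ℕ) :
    UC^[t] (sk γ D) = sk (γ ^ 2 ^ t) D := by
  induction t with
  | zero => simp
  | succ t ih => rw [Function.iterate_succ_apply', ih, UC_sk, ← pow_mul, ← pow_succ]
end

section
/- (Collapse commutes with insertion.) Let γ > 1 be a real, f : ℤ → ℕ a function and x a positive real. Then UC(f + δ_{⌈log_γ x⌉}) = UC(f) + δ_{⌈log_{γ²} x⌉}, where δ_k denotes the indicator function of the integer k. Hence inserting an item and then collapsing yields the same sketch as collapsing and then inserting the item at its new (base-γ²) bucket index. -/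
/-- Indicator function of the integer k. -/
def delta (k : ℤ) : ℤ → ℕ := fun j => if j = k then 1 else 0

/-- Collapse commutes with insertion: inserting and then
collapsing equals collapsing and then inserting at the base-γ² index. -/
theorem collapse_commutes_with_insert (γ : ℝ) (hγ : 1 < γ) (f : ℤ → ℕ) (x : ℝ)
    (hx : 0 < x) :
    UC (f + delta ⌈Real.logb γ x⌉) = UC f + delta ⌈Real.logb (γ ^ 2) x⌉ := by
  have hlog : Real.logb (γ ^ 2) x = Real.logb γ x / 2 := by
    simp only [Real.logb, Real.log_pow]
    push_cast
    rw [div_div, mul_comm]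
  rw [hlog]
  -- With `m = ⌈L⌉` and `n = ⌈L / 2⌉`, the bounds below give `m = 2 * n - 1` or `m = 2 * n`,
  -- so bucket `m` is merged exactly into bucket `n`.
  generalize Real.logb γ x = L
  have hn_le := Int.le_ceil (L / 2)
  have hn_lt := Int.ceil_lt_add_one (L / 2)
  have hupper : ⌈L⌉ ≤ 2 * ⌈L / 2⌉ := by
    apply Int.ceil_le.mpr
    push_cast
    linarith
  have hlower : 2 * ⌈L / 2⌉ - 2 < ⌈L⌉ := by
    apply Int.lt_ceil.mpr
    push_cast
    linarith
  funext j
  simp only [UC, delta, Pi.add_apply]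
  split_ifs <;> omega
end

section
/- (Size guarantee.) Let γ > 1 be a real, let m ≥ 1 be a natural number, and let x_min, x_max be reals with 0 < x_min ≤ x_max. If γ^(m−1) ≥ x_max/x_min, then the set of bucket indices { ⌈log_γ x⌉ : x_min ≤ x ≤ x_max } has cardinality at most m. Hence a sketch with base γ over data drawn from [x_min, x_max] has at most m nonempty buckets. -/
/-- Size guarantee: if γ^(m−1) ≥ x_max/x_min then the set of
bucket indices ⌈log_γ x⌉ attained on [x_min, x_max] has cardinality at most m. -/
theorem size_guarantee (γ : ℝ) (hγ : 1 < γ) (m : ℕ) (hm : 1 ≤ m)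
    (xmin xmax : ℝ) (hmin : 0 < xmin) (hle : xmin ≤ xmax)
    (hbase : xmax / xmin ≤ γ ^ (m - 1)) :
    {i : ℤ | ∃ x : ℝ, xmin ≤ x ∧ x ≤ xmax ∧ i = ⌈Real.logb γ x⌉}.Finite ∧
    {i : ℤ | ∃ x : ℝ, xmin ≤ x ∧ x ≤ xmax ∧ i = ⌈Real.logb γ x⌉}.ncard ≤ m := by
  -- Since `log_γ xmax ≤ log_γ xmin + (m - 1)`, all indices lie in a window of `m` integers.
  have hsub : {i : ℤ | ∃ x : ℝ, xmin ≤ x ∧ x ≤ xmax ∧ i = ⌈Real.logb γ x⌉} ⊆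
      (Finset.Icc ⌈Real.logb γ xmin⌉ (⌈Real.logb γ xmin⌉ + ((m - 1 : ℕ) : ℤ)) : Set ℤ) := by
    rintro i ⟨x, hx1, hx2, rfl⟩
    have hx : 0 < x := hmin.trans_le hx1
    rw [Finset.coe_Icc, Set.mem_Icc]
    refine ⟨Int.ceil_le_ceil (Real.logb_le_logb_of_le hγ hmin hx1), Int.ceil_le.mpr ?_⟩
    have hpow : 0 < γ ^ (m - 1) := pow_pos (by linarith) _
    have hlog : Real.logb γ x ≤ Real.logb γ (γ ^ (m - 1) * xmin) :=
      Real.logb_le_logb_of_le hγ hx (hx2.trans ((div_le_iff₀ hmin).mp hbase))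
    rw [Real.logb_mul hpow.ne' hmin.ne', Real.logb_pow,
      Real.logb_self_eq_one hγ, mul_one] at hlog
    have hceil := Int.le_ceil (Real.logb γ xmin)
    rw [Int.cast_add, Int.cast_natCast]
    linarith
  refine ⟨(Finset.finite_toSet _).subset hsub,
    (Set.ncard_le_ncard hsub (Finset.finite_toSet _)).trans ?_⟩
  rw [Set.ncard_coe_finset, Int.card_Icc]
  omega
end

section
/- If γ > 1 is a real, m ≥ 1 is a natural number, x_min and x_max are reals with 0 < x_min ≤ x_max, and D is a nonempty multiset of reals all lying in [x_min, x_max] such that the set of bucket indices { ⌈log_γ x⌉ : x ∈ D } has cardinality strictly greater than m, then γ^(m−1) ≤ x_max/x_min. Equivalently, if the base γ is too large relative to the data range, the sketch cannot exceed m buckets. -/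
/-!
Every bucket index lies in the integer interval from `⌈log_γ xmin⌉` to `⌈log_γ xmax⌉`, so more
than `m` distinct indices force `m ≤ ⌈log_γ xmax⌉ - ⌈log_γ xmin⌉ < log_γ (xmax / xmin) + 1`.
Exponentiating to base `γ` gives the bound.
-/

/-- if a multiset D of reals in [x_min, x_max] attains strictly
more than m distinct bucket indices at base γ, then γ^(m−1) ≤ x_max/x_min. -/
theorem too_many_buckets_bounds_base (γ : ℝ) (hγ : 1 < γ) (m : ℕ) (hm : 1 ≤ m)
    (xmin xmax : ℝ) (hmin : 0 < xmin) (hle : xmin ≤ xmax)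
    (D : Multiset ℝ) (hne : D ≠ 0) (hmem : ∀ x ∈ D, xmin ≤ x ∧ x ≤ xmax)
    (hcard : m < {k : ℤ | ∃ x ∈ D, ⌈Real.logb γ x⌉ = k}.ncard) :
    γ ^ (m - 1) ≤ xmax / xmin := by
  have hmax : 0 < xmax := hmin.trans_le hle
  have hsub : {k : ℤ | ∃ x ∈ D, ⌈Real.logb γ x⌉ = k} ⊆
      (Finset.Icc ⌈Real.logb γ xmin⌉ ⌈Real.logb γ xmax⌉ : Finset ℤ) := by
    rintro k ⟨x, hx, rfl⟩
    obtain ⟨h1, h2⟩ := hmem x hx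
    rw [Finset.mem_coe, Finset.mem_Icc]
    exact ⟨Int.ceil_mono (Real.logb_le_logb_of_le hγ hmin h1),
      Int.ceil_mono (Real.logb_le_logb_of_le hγ (hmin.trans_le h1) h2)⟩
  have hle_card := Set.ncard_le_ncard hsub (Finset.finite_toSet _)
  rw [Set.ncard_coe_finset, Int.card_Icc] at hle_card
  have hdiff : (m : ℤ) ≤ ⌈Real.logb γ xmax⌉ - ⌈Real.logb γ xmin⌉ := by omega
  have hdiff' : (m : ℝ) ≤ ⌈Real.logb γ xmax⌉ - ⌈Real.logb γ xmin⌉ := by exact_mod_cast hdiff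
  have hlog : ((m - 1 : ℕ) : ℝ) ≤ Real.logb γ (xmax / xmin) := by
    rw [Real.logb_div hmax.ne' hmin.ne', Nat.cast_sub hm, Nat.cast_one]
    linarith [Int.ceil_lt_add_one (Real.logb γ xmax), Int.le_ceil (Real.logb γ xmin)]
  rwa [Real.le_logb_iff_rpow_le hγ (div_pos hmax hmin), Real.rpow_natCast] at hlog
end

section
/- (Bound on the final base after collapsing, underlying Theorem 2.) Let γ₀ > 1 be a real, let m ≥ 2 be a natural number, let x_min, x_max be reals with 0 < x_min ≤ x_max, let D be a multiset of reals in [x_min, x_max], and let t ≥ 1 be a natural number. If the set of bucket indices of D at base γ₀^(2^(t−1)) has cardinality strictly greater than m (i.e., one more collapse was still needed), then the base after the next collapse satisfies γ₀^(2^t) ≤ (x_max/x_min)^(2/(m−1)). Hence the final base of UDDSketch, and therefore its guaranteed relative accuracy, is bounded in terms of x_max/x_min and the sketch size m, independently of the input distribution. -/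
/-!
Put `g = γ₀ ^ 2 ^ (t - 1)`. Every bucket index of `D` lies between `⌈log_g xmin⌉` and `⌈log_g xmax⌉`,
so more than `m` distinct indices force these two integers to differ by at least `m`. Undoing the
ceilings loses less than one, hence `m - 1 < log_g (xmax / xmin)`, that is,
`g ^ (m - 1) ≤ xmax / xmin`. Raising this to the power `2 / (m - 1)` gives the bound for
`g ^ 2 = γ₀ ^ 2 ^ t`.
-/

/-- Bound on the final base after collapsing, underlying
Theorem 2: if at base γ₀^(2^(t−1)) the multiset D of reals in
[x_min, x_max] still occupies strictly more than m buckets, then the base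
after the next collapse satisfies γ₀^(2^t) ≤ (x_max/x_min)^(2/(m−1)). -/
theorem final_base_bound (γ₀ : ℝ) (hγ : 1 < γ₀) (m : ℕ) (hm : 2 ≤ m)
    (xmin xmax : ℝ) (hmin : 0 < xmin) (hle : xmin ≤ xmax)
    (D : Multiset ℝ) (hmem : ∀ x ∈ D, xmin ≤ x ∧ x ≤ xmax)
    (t : ℕ) (ht : 1 ≤ t)
    (hcard : m < {k : ℤ | ∃ x ∈ D, ⌈Real.logb (γ₀ ^ 2 ^ (t - 1)) x⌉ = k}.ncard) :
    γ₀ ^ 2 ^ t ≤ (xmax / xmin) ^ ((2 : ℝ) / ((m : ℝ) - 1)) := by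
  have hg : 1 < γ₀ ^ 2 ^ (t - 1) := one_lt_pow₀ hγ (by positivity)
  have hsq : γ₀ ^ 2 ^ t = (γ₀ ^ 2 ^ (t - 1)) ^ 2 := by
    rw [← pow_mul, ← pow_succ, Nat.sub_add_cancel ht]
  rw [hsq]
  generalize γ₀ ^ 2 ^ (t - 1) = g at hg hcard
  have hmax : 0 < xmax := hmin.trans_le hle
  have hm1 : (0 : ℝ) < (m : ℝ) - 1 := by
    have : (2 : ℝ) ≤ m := by exact_mod_cast hm
    linarith
  have hsub : {k : ℤ | ∃ x ∈ D, ⌈Real.logb g x⌉ = k} ⊆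
      (Finset.Icc ⌈Real.logb g xmin⌉ ⌈Real.logb g xmax⌉ : Finset ℤ) := by
    rintro k ⟨x, hx, rfl⟩
    obtain ⟨h1, h2⟩ := hmem x hx
    rw [Finset.coe_Icc]
    exact ⟨Int.ceil_le_ceil (Real.logb_le_logb_of_le hg hmin h1),
      Int.ceil_le_ceil (Real.logb_le_logb_of_le hg (hmin.trans_le h1) h2)⟩
  have hspread : (m : ℤ) ≤ ⌈Real.logb g xmax⌉ - ⌈Real.logb g xmin⌉ := by
    have h := Set.ncard_le_ncard hsub (Finset.finite_toSet _)
    rw [Set.ncard_coe_finset, Int.card_Icc] at h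
    omega
  have hlog : (m : ℝ) - 1 ≤ Real.logb g (xmax / xmin) := by
    have h : (m : ℝ) ≤ ⌈Real.logb g xmax⌉ - ⌈Real.logb g xmin⌉ := by exact_mod_cast hspread
    rw [Real.logb_div hmax.ne' hmin.ne']
    linarith [Int.ceil_lt_add_one (Real.logb g xmax), Int.le_ceil (Real.logb g xmin)]
  have hpow : g ^ ((m : ℝ) - 1) ≤ xmax / xmin :=
    (Real.le_logb_iff_rpow_le hg (div_pos hmax hmin)).1 hlog
  have hg0 : 0 ≤ g := by linarith
  calc g ^ 2 = (g ^ ((m : ℝ) - 1)) ^ ((2 : ℝ) / ((m : ℝ) - 1)) := by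
        rw [← Real.rpow_mul hg0, mul_div_cancel₀ _ hm1.ne', Real.rpow_two]
    _ ≤ (xmax / xmin) ^ ((2 : ℝ) / ((m : ℝ) - 1)) :=
        Real.rpow_le_rpow (by positivity) hpow (by positivity)
end

section
/- (Quantile query correctness.) Let γ > 1 be a real with α = (γ−1)/(γ+1), let D be a nonempty multiset of positive reals of cardinality n, let q ∈ [0,1], and let r = ⌊1 + q(n−1)⌋ be the target rank, so x_q is the r-th smallest element of D counted with multiplicity. Let i be the least integer such that Σ_{k ≤ i} sk_γ(D)(k) ≥ r. Then the returned estimate x̃_q = 2γ^i/(γ+1) satisfies |x̃_q − x_q| ≤ α·x_q, i.e., the sketch answers every q-quantile query with relative error at most α. -/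
/-- A downward closed predicate holds on an initial segment of a sorted list, and its length is the
number of entries satisfying the predicate. -/
theorem sorted_getElem_iff_countP (p : ℝ → Prop) [DecidablePred p]
    (hp : ∀ x y, x ≤ y → p y → p x) (l : List ℝ) (hl : l.Pairwise (· ≤ ·)) :
    ∀ (m : ℕ) (hm : m < l.length), p l[m] ↔ m < l.countP (fun x => decide (p x)) := by
  induction l with
  | nil => intro m hm; simp at hm
  | cons a t ih =>
    rw [List.pairwise_cons] at hl
    intro m hm
    by_cases ha : p a
    · cases m with
      | zero => simp [ha]
      | succ m =>
        have := ih hl.2 m (by simpa using hm)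
        simpa [ha, List.countP_cons] using this
      -- The smallest entry fails the predicate, hence so do all entries.
    · have ht : ∀ y ∈ a :: t, ¬ p y := by
        intro y hy hpy
        rcases List.mem_cons.1 hy with rfl | hy
        · exact ha hpy
        · exact ha (hp _ _ (hl.1 y hy) hpy)
      have h0 : (a :: t).countP (fun x => decide (p x)) = 0 := by
        rw [List.countP_eq_zero]
        intro y hy
        simpa using ht y hy
      rw [h0]
      simpa using ht _ (List.getElem_mem hm)

/-- Quantile query correctness: with α = (γ−1)/(γ+1), target
rank r = ⌊1 + q(n−1)⌋, x_q the r-th smallest element of D, and i the least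
integer such that the cumulative bucket count up to i reaches r, the
returned estimate 2γ^i/(γ+1) is an α-accurate q-quantile. -/
theorem quantile_query_correctness (γ : ℝ) (hγ : 1 < γ) (D : Multiset ℝ)
    (hne : D ≠ 0) (hpos : ∀ x ∈ D, 0 < x)
    (q : ℝ) (hq0 : 0 ≤ q) (hq1 : q ≤ 1)
    (r : ℕ) (hr : (r : ℤ) = ⌊1 + q * ((D.card : ℝ) - 1)⌋)
    (xq : ℝ) (hxq : xq = (D.sort (· ≤ ·)).getD (r - 1) 0)
    (i : ℤ)
    (hi : IsLeast {j : ℤ | r ≤ (D.filter (fun x => ⌈Real.logb γ x⌉ ≤ j)).card} i) :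
    |2 * γ ^ i / (γ + 1) - xq| ≤ (γ - 1) / (γ + 1) * xq := by
  have hγ0 : 0 < γ := by linarith
  have hcard : 1 ≤ D.card := Multiset.card_pos.2 hne
  have hcard' : (1 : ℝ) ≤ D.card := by exact_mod_cast hcard
  have hr1 : 1 ≤ r := by
    have : (1 : ℤ) ≤ r := by
      rw [hr, Int.le_floor]
      push_cast
      nlinarith
    exact_mod_cast this
  have hrn : r ≤ D.card := by
    have h1 : ((r : ℤ) : ℝ) ≤ 1 + q * ((D.card : ℝ) - 1) := by
      rw [hr]; exact Int.floor_le _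
    have : (r : ℝ) ≤ D.card := by
      push_cast at h1
      nlinarith
    exact_mod_cast this
  have hm : r - 1 < (D.sort (· ≤ ·)).length := by
    rw [Multiset.length_sort]; omega
  rw [List.getD_eq_getElem _ _ hm] at hxq
  have hmem : xq ∈ D := by
    rw [← Multiset.mem_sort (r := (· ≤ ·)), hxq]
    exact List.getElem_mem hm
  have hx := hpos xq hmem
  -- Nonpositive reals are put into every bucket range so that the predicate is downward closed on
  -- all of `ℝ`; on `D` it agrees with the bucket condition.
  have key : ∀ j : ℤ, ⌈Real.logb γ xq⌉ ≤ j ↔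
      r ≤ (D.filter (fun x => ⌈Real.logb γ x⌉ ≤ j)).card := by
    intro j
    classical
    have h := sorted_getElem_iff_countP (fun x => 0 < x → ⌈Real.logb γ x⌉ ≤ j)
      (fun x y hxy hy h0 => (Int.ceil_mono
        (Real.logb_le_logb_of_le hγ h0 hxy)).trans (hy (h0.trans_le hxy)))
      (D.sort (· ≤ ·)) (Multiset.pairwise_sort _ _) (r - 1) hm
    rw [← hxq, ← Multiset.coe_countP, Multiset.sort_eq, Multiset.countP_eq_card_filter,
      Multiset.filter_congr (q := fun x => ⌈Real.logb γ x⌉ ≤ j)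
        (fun x hxD => by simp [hpos x hxD])] at h
    simp only [hx, true_imp_iff] at h
    rw [h]
    omega
  have hle : xq ≤ γ ^ i := by
    have h := Int.ceil_le.1 ((key i).2 hi.1)
    rwa [Real.logb_le_iff_le_rpow hγ hx, Real.rpow_intCast] at h
  have hlt : γ ^ i < γ * xq := by
    have h : ¬ ⌈Real.logb γ xq⌉ ≤ i - 1 := by
      intro h
      have := hi.2 ((key (i - 1)).1 h)
      omega
    rw [not_le, Int.lt_ceil, Real.lt_logb_iff_rpow_lt hγ hx, Real.rpow_intCast,
      zpow_sub_one₀ hγ0.ne', ← div_eq_mul_inv, div_lt_iff₀ hγ0] at h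
    linarith
  have hg : 0 < γ + 1 := by linarith
  have e1 : 2 * γ ^ i / (γ + 1) - xq = (2 * γ ^ i - (γ + 1) * xq) / (γ + 1) := by
    field_simp
  rw [e1, abs_div, abs_of_pos hg, div_mul_eq_mul_div]
  gcongr
  rw [abs_le]
  constructor <;> linarith
end

section
/- (Distribution-independent accuracy of the final sketch.) Let γ₀ > 1 be a real, m ≥ 2 a natural number, x_min and x_max reals with 0 < x_min ≤ x_max, and t ≥ 1 a natural number such that the set of bucket indices of a multiset D of reals in [x_min, x_max] at base γ₀^(2^(t−1)) has cardinality strictly greater than m. Set γ = γ₀^(2^t) and ρ = (x_max/x_min)^(2/(m−1)). Then for every element x of D lying in the bucket with index i at base γ (i.e., γ^(i−1) < x ≤ γ^i), the estimate x̃ = 2γ^i/(γ+1) satisfies |x̃ − x| ≤ ((ρ−1)/(ρ+1))·x. Hence every quantile of D is estimated by the final UDDSketch summary with relative error at most ((x_max/x_min)^(2/(m−1)) − 1)/((x_max/x_min)^(2/(m−1)) + 1). -/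
/-!
Let `g = γ₀ ^ 2 ^ (t - 1)`, so that the final base is `g ^ 2`. The bucket indices at base `g` are
integers between `⌈log_g xmin⌉` and `⌈log_g xmax⌉`; more than `m` of them force
`m - 1 < log_g (xmax / xmin)`, i.e. `g ^ (m - 1) ≤ xmax / xmin`, hence `g ^ 2 ≤ ρ`
(`sq_base_le_of_card`). The estimate at base `γ` has relative error at most `(γ - 1) / (γ + 1)`
(`bucket_estimate_error`), and this bound is increasing in `γ`.
-/

/-- The estimate `2 y / (γ + 1)` for the bucket `(y / γ, y]`, with its relative error relaxed to
that of any larger base `ρ`. -/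
lemma bucket_estimate_error {γ ρ x y : ℝ} (hγ : 1 < γ) (hρ : γ ≤ ρ) (hx : 0 < x)
    (hlo : y ≤ γ * x) (hhi : x ≤ y) :
    |2 * y / (γ + 1) - x| ≤ (ρ - 1) / (ρ + 1) * x := by
  have hmono : (γ - 1) / (γ + 1) ≤ (ρ - 1) / (ρ + 1) := by
    rw [div_le_div_iff₀ (by linarith) (by linarith)]
    nlinarith
  refine le_trans ?_ (mul_le_mul_of_nonneg_right hmono hx.le)
  have h1 : 2 * y / (γ + 1) - x = (2 * y - (γ + 1) * x) / (γ + 1) := by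
    field_simp
  rw [h1, abs_div, abs_of_pos (show 0 < γ + 1 by linarith), div_mul_eq_mul_div]
  refine div_le_div_of_nonneg_right ?_ (by linarith)
  rw [abs_le]
  constructor <;> nlinarith

/-- More than `m` occupied buckets at base `g` bound the collapsed base `g ^ 2` in terms of the
range of the data. -/
lemma sq_base_le_of_card {g : ℝ} (hg : 1 < g) {m : ℕ} (hm : 2 ≤ m) {xmin xmax : ℝ}
    (hmin : 0 < xmin) (hle : xmin ≤ xmax) {D : Multiset ℝ}
    (hmem : ∀ x ∈ D, xmin ≤ x ∧ x ≤ xmax)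
    (hcard : m < {k : ℤ | ∃ x ∈ D, ⌈Real.logb g x⌉ = k}.ncard) :
    g ^ 2 ≤ (xmax / xmin) ^ ((2 : ℝ) / ((m : ℝ) - 1)) := by
  have hmax : 0 < xmax := hmin.trans_le hle
  set a := ⌈Real.logb g xmin⌉ with ha
  set b := ⌈Real.logb g xmax⌉ with hb
  have hsub : {k : ℤ | ∃ x ∈ D, ⌈Real.logb g x⌉ = k} ⊆ (Finset.Icc a b : Finset ℤ) := by
    rintro k ⟨x, hx, rfl⟩
    obtain ⟨h1, h2⟩ := hmem x hx
    rw [Finset.coe_Icc]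
    exact ⟨Int.ceil_le_ceil (Real.logb_le_logb_of_le hg hmin h1),
      Int.ceil_le_ceil (Real.logb_le_logb_of_le hg (hmin.trans_le h1) h2)⟩
  have hc := Set.ncard_le_ncard hsub (Finset.finite_toSet _)
  rw [Set.ncard_coe_finset, Int.card_Icc] at hc
  have hab : (m : ℤ) ≤ b - a := by omega
  have habR : (m : ℝ) ≤ b - a := by exact_mod_cast hab
  have h1 : Real.logb g xmin ≤ a := Int.le_ceil _
  have h2 : (b : ℝ) < Real.logb g xmax + 1 := Int.ceil_lt_add_one _
  have hlog : (m : ℝ) - 1 ≤ Real.logb g (xmax / xmin) := by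
    rw [Real.logb_div hmax.ne' hmin.ne']
    linarith
  have hpow : g ^ ((m : ℝ) - 1) ≤ xmax / xmin :=
    (Real.le_logb_iff_rpow_le hg (div_pos hmax hmin)).1 hlog
  have hm' : (2 : ℝ) ≤ m := by exact_mod_cast hm
  have hm1 : (0 : ℝ) < (m : ℝ) - 1 := by linarith
  calc g ^ 2 = (g ^ ((m : ℝ) - 1)) ^ ((2 : ℝ) / ((m : ℝ) - 1)) := by
        rw [← Real.rpow_mul (by linarith), mul_div_cancel₀ _ hm1.ne', Real.rpow_two]
    _ ≤ _ := Real.rpow_le_rpow (by positivity) hpow (by positivity)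

/-- Distribution-independent accuracy of the final sketch:
if at base γ₀^(2^(t−1)) the data in [x_min, x_max] still occupy more than m
buckets, then with final base γ = γ₀^(2^t) and ρ = (x_max/x_min)^(2/(m−1)),
every item x in bucket i of the final sketch is estimated by 2γ^i/(γ+1)
with relative error at most (ρ−1)/(ρ+1). -/
theorem final_sketch_accuracy (γ₀ : ℝ) (hγ : 1 < γ₀) (m : ℕ) (hm : 2 ≤ m)
    (xmin xmax : ℝ) (hmin : 0 < xmin) (hle : xmin ≤ xmax)
    (D : Multiset ℝ) (hmem : ∀ x ∈ D, xmin ≤ x ∧ x ≤ xmax)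
    (t : ℕ) (ht : 1 ≤ t)
    (hcard : m < {k : ℤ | ∃ x ∈ D, ⌈Real.logb (γ₀ ^ 2 ^ (t - 1)) x⌉ = k}.ncard) :
    ∀ x ∈ D, ∀ i : ℤ,
      (γ₀ ^ 2 ^ t) ^ (i - 1) < x → x ≤ (γ₀ ^ 2 ^ t) ^ i →
      |2 * (γ₀ ^ 2 ^ t) ^ i / (γ₀ ^ 2 ^ t + 1) - x| ≤
        (((xmax / xmin) ^ ((2 : ℝ) / ((m : ℝ) - 1)) - 1) /
          ((xmax / xmin) ^ ((2 : ℝ) / ((m : ℝ) - 1)) + 1)) * x := by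
  intro x hx i hlo hhi
  have hg : 1 < γ₀ ^ 2 ^ (t - 1) := one_lt_pow₀ hγ (by positivity)
  have hsq : γ₀ ^ 2 ^ t = (γ₀ ^ 2 ^ (t - 1)) ^ 2 := by
    rw [← pow_mul, ← pow_succ, Nat.sub_add_cancel ht]
  have hγ1 : 1 < γ₀ ^ 2 ^ t := one_lt_pow₀ hγ (by positivity)
  refine bucket_estimate_error hγ1 ?_ (hmin.trans_le (hmem x hx).1) ?_ hhi
  · rw [hsq]
    exact sq_base_le_of_card hg hm hmin hle hmem hcard
  · have hpos : 0 < γ₀ ^ 2 ^ t := by linarith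
    rw [zpow_sub_one₀ hpos.ne', ← div_eq_mul_inv, div_lt_iff₀ hpos] at hlo
    linarith
end
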